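/- Let {G_n} be a sequence of labeled graphs whose associated graphons w_{G_n} converge in cut-distance to a graphon w, i.e. δ_□(w_{G_n}, w) → 0. If Γ(w_{G_n}) → 0, then the limit is Robinsonian: there exists a Robinson graphon z with δ_□(w, z) = 0. -/

import Mathlib

/-!
Why the limit is Robinson. Write `u_n` for the step graphon of `G n`. Testing `Γ(u_n, A)` on
rectangles shows that, for sets in the order `A' < A < B < B'`, the average of `u_n` over the outer
rectangle `A' × B'` exceeds its average over `A × B` at most by a multiple of `Γ(u_n)`
(`IsUnitKernel.nested_bound`). By compactness there is an ultrafilter on `ℕ` along which the averages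
of `u_n` over all blocks of all uniform grids converge, and since `Γ(u_n) → 0` the limits increase
from outer to inner blocks (`exists_isNestedArray`).

The Robinson graphon is `innerInf a`: its value at `(x, y)` is the infimum of the limiting averages
over the blocks above the diagonal that lie between `x` and `y`. On most blocks above the
diagonal of the `K × K` grid it is
squeezed between the limiting averages over the next outer and the next inner block. The integral of
`u_n` over any part `S × T` of such a block satisfies the same bounds up to small errors, again by
`nested_bound`; this is what gives closeness in cut norm rather than only of averages
(`IsNestedArray.rectInt_sub_le`). The sum of the gaps between the two bounds telescopes along the
antidiagonals, so it is `O(K)` against a total of `K²` blocks (`IsNestedArray.sum_blockGap_le`), and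
therefore `u_n` converges to `innerInf a` in cut norm along the ultrafilter.

Finally `w` is close to `u_n` in cut distance and `u_n` is close to `innerInf a` in cut norm. The
triangle inequality needs measure-preserving bijections to have measure-preserving inverses, which is
the Lusin–Souslin theorem (`exists_inverse`, `cutDist_le`).
-/

open MeasureTheory Set Filter

/-- The cut norm of a kernel `w` on `[0,1]²`. -/
noncomputable def cutNorm (w : ℝ → ℝ → ℝ) : ℝ :=
  sSup {r : ℝ | ∃ S T : Set ℝ, MeasurableSet S ∧ MeasurableSet T ∧
    S ⊆ Icc 0 1 ∧ T ⊆ Icc 0 1 ∧ r = |∫ x in S, ∫ y in T, w x y|}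

/-- The cut distance `δ_□(u,w) = inf_φ ‖u^φ − w‖_□`, the infimum being over
measure-preserving bijections `φ` of `[0,1]`. -/
noncomputable def cutDist (u w : ℝ → ℝ → ℝ) : ℝ :=
  sInf {r : ℝ | ∃ φ : ℝ → ℝ,
    MeasurePreserving φ (volume.restrict (Icc 0 1)) (volume.restrict (Icc 0 1)) ∧
    Set.BijOn φ (Icc 0 1) (Icc 0 1) ∧
    r = cutNorm (fun x y => u (φ x) (φ y) - w x y)}

/-- `Γ(w, A)`. -/
noncomputable def gammaA (w : ℝ → ℝ → ℝ) (A : Set ℝ) : ℝ :=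
  ∫ y in Icc (0:ℝ) 1, ∫ z in Icc (0:ℝ) 1,
    if y < z then
      max (∫ x in A ∩ Icc 0 y, (w x z - w x y)) 0
        + max (∫ x in A ∩ Icc z 1, (w x y - w x z)) 0
    else 0

/-- `Γ(w) = sup { Γ(w,A) : A ⊆ [0,1] measurable }`. -/
noncomputable def Gamma (w : ℝ → ℝ → ℝ) : ℝ :=
  sSup {r : ℝ | ∃ A : Set ℝ, MeasurableSet A ∧ A ⊆ Icc 0 1 ∧ r = gammaA w A}

/-- A graphon: symmetric, measurable, `[0,1]`-valued on `[0,1]²`. -/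
def IsGraphon (w : ℝ → ℝ → ℝ) : Prop :=
  Measurable (Function.uncurry w) ∧ (∀ x y, w x y = w y x) ∧
    ∀ x y : ℝ, x ∈ Icc (0:ℝ) 1 → y ∈ Icc (0:ℝ) 1 → w x y ∈ Icc (0:ℝ) 1

/-- The Robinson property. -/
def IsRobinson (w : ℝ → ℝ → ℝ) : Prop :=
  ∀ x y z : ℝ, 0 ≤ x → x ≤ y → y ≤ z → z ≤ 1 → w x z ≤ min (w x y) (w y z)

/-- A finite labeled graph, given by a symmetric loopless boolean adjacency matrix. -/
structure FinGraph where
  n : ℕ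
  adj : Fin n → Fin n → Bool
  symm : ∀ i j, adj i j = adj j i
  loopless : ∀ i, adj i i = false

/-- The index of the subinterval `((i-1)/n, i/n]` containing `x`, as a natural number
(zero-based). -/
noncomputable def vertexOf (n : ℕ) (x : ℝ) : ℕ := (⌈(n : ℝ) * x⌉ - 1).toNat

/-- The step graphon `w_G` associated with the adjacency matrix of a labeled graph:
it takes the value `A_{ij}` on the cell `I_i × I_j`. -/
noncomputable def graphStep (G : FinGraph) (x y : ℝ) : ℝ :=
  if h : vertexOf G.n x < G.n ∧ vertexOf G.n y < G.n then
    (if G.adj ⟨vertexOf G.n x, h.1⟩ ⟨vertexOf G.n y, h.2⟩ then 1 else 0)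
  else 0

/-! ### Kernels and their integrals over rectangles -/

/-- A symmetric measurable kernel taking values in `[0,1]` on the whole plane, not only on the unit
square. -/
structure IsUnitKernel (u : ℝ → ℝ → ℝ) : Prop where
  meas : Measurable (Function.uncurry u)
  symm : ∀ x y, u x y = u y x
  nonneg : ∀ x y, 0 ≤ u x y
  le_one : ∀ x y, u x y ≤ 1

lemma isUnitKernel_graphStep (G : FinGraph) : IsUnitKernel (graphStep G) := by
  have hv : Measurable (vertexOf G.n) := by
    have h1 : Measurable (fun x : ℝ => ⌈(G.n : ℝ) * x⌉) :=
      Int.measurable_ceil.comp (measurable_const.mul measurable_id)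
    exact (measurable_of_countable (fun k : ℤ => (k - 1).toNat)).comp h1
  refine ⟨?_, ?_, ?_, ?_⟩
  · have h := (measurable_of_countable (fun p : ℕ × ℕ =>
      if h : p.1 < G.n ∧ p.2 < G.n then
        (if G.adj ⟨p.1, h.1⟩ ⟨p.2, h.2⟩ then (1 : ℝ) else 0) else 0)).comp
      ((hv.comp measurable_fst).prodMk (hv.comp measurable_snd) : Measurable
        (fun q : ℝ × ℝ => (vertexOf G.n q.1, vertexOf G.n q.2)))
    exact h
  · intro x y
    unfold graphStep
    by_cases h : vertexOf G.n x < G.n ∧ vertexOf G.n y < G.n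
    · rw [dif_pos h, dif_pos h.symm, G.symm]
    · rw [dif_neg h, dif_neg (fun h' => h h'.symm)]
  · intro x y
    unfold graphStep
    split_ifs <;> norm_num
  · intro x y
    unfold graphStep
    split_ifs <;> norm_num

lemma integrableOn_rect {f : ℝ → ℝ → ℝ} (hf : Measurable (Function.uncurry f)) {c : ℝ}
    (hb : ∀ x ∈ Icc (0 : ℝ) 1, ∀ y ∈ Icc (0 : ℝ) 1, |f x y| ≤ c) {S T : Set ℝ}
    (hS : S ⊆ Icc 0 1) (hT : T ⊆ Icc 0 1) :
    IntegrableOn (Function.uncurry f) (S ×ˢ T) (volume.prod volume) := by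
  have h : IntegrableOn (Function.uncurry f) (Icc (0 : ℝ) 1 ×ˢ Icc (0 : ℝ) 1)
      (volume.prod volume) := by
    refine Measure.integrableOn_of_bounded (M := c) ?_ hf.aestronglyMeasurable ?_
    · rw [Measure.prod_prod]; simp
    · refine (ae_restrict_iff' (measurableSet_Icc.prod measurableSet_Icc)).2 (ae_of_all _ ?_)
      rintro ⟨x, y⟩ ⟨hx, hy⟩
      exact hb x hx y hy
  exact h.mono_set (prod_mono hS hT)

/-- The integral of `f` over the rectangle `S × T`. -/
noncomputable def rectInt (f : ℝ → ℝ → ℝ) (S T : Set ℝ) : ℝ := ∫ x in S, ∫ y in T, f x y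

lemma rectInt_eq_prod {f : ℝ → ℝ → ℝ} (hf : Measurable (Function.uncurry f)) {c : ℝ}
    (hb : ∀ x ∈ Icc (0 : ℝ) 1, ∀ y ∈ Icc (0 : ℝ) 1, |f x y| ≤ c) {S T : Set ℝ}
    (hS : S ⊆ Icc 0 1) (hT : T ⊆ Icc 0 1) :
    rectInt f S T = ∫ p in S ×ˢ T, Function.uncurry f p ∂(volume.prod volume) :=
  (setIntegral_prod _ (integrableOn_rect hf hb hS hT)).symm

lemma vol_lt_top {S : Set ℝ} (hS : S ⊆ Icc 0 1) : volume S < ⊤ :=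
  (measure_mono hS).trans_lt (by simp)

lemma vol_le_one {S : Set ℝ} (hS : S ⊆ Icc 0 1) : volume.real S ≤ 1 := by
  have := measureReal_mono hS (by simp : volume (Icc (0:ℝ) 1) ≠ ⊤)
  simpa using this

namespace IsUnitKernel

variable {u : ℝ → ℝ → ℝ}

lemma abs_le (hu : IsUnitKernel u) (x y : ℝ) : |u x y| ≤ 1 := by
  rw [abs_of_nonneg (hu.nonneg x y)]; exact hu.le_one x y

lemma integrable_slice (hu : IsUnitKernel u) (y : ℝ) {S : Set ℝ} (hS : S ⊆ Icc 0 1) :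
    IntegrableOn (fun x => u x y) S := by
  refine Measure.integrableOn_of_bounded (M := 1) (vol_lt_top hS).ne
    (hu.meas.comp (measurable_id.prodMk measurable_const)).aestronglyMeasurable
    (ae_of_all _ fun x => hu.abs_le x y)

lemma rectInt_swap (hu : IsUnitKernel u) {S T : Set ℝ} (hS : S ⊆ Icc 0 1) (hT : T ⊆ Icc 0 1) :
    rectInt u S T = rectInt u T S := by
  unfold rectInt
  rw [integral_integral_swap]
  · simp_rw [hu.symm]
  · rw [Measure.prod_restrict]
    exact integrableOn_rect hu.meas (fun x _ y _ => hu.abs_le x y) hS hT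

lemma rectInt_nonneg (hu : IsUnitKernel u) (S T : Set ℝ) : 0 ≤ rectInt u S T :=
  integral_nonneg fun x => integral_nonneg fun y => hu.nonneg x y

lemma rectInt_le (hu : IsUnitKernel u) {S T : Set ℝ} (hS : S ⊆ Icc 0 1) (hT : T ⊆ Icc 0 1) :
    rectInt u S T ≤ volume.real S * volume.real T := by
  unfold rectInt
  refine (le_abs_self _).trans ?_
  have h : ∀ x ∈ S, ‖∫ y in T, u x y‖ ≤ volume.real T := by
    intro x _
    simpa using norm_setIntegral_le_of_norm_le_const (μ := volume) (s := T) (f := u x) (C := 1)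
      (vol_lt_top hT) (fun y _ => hu.abs_le x y)
  have := norm_setIntegral_le_of_norm_le_const (vol_lt_top hS) h
  rwa [mul_comm, Real.norm_eq_abs] at this

end IsUnitKernel

/-! ### Lower bounds for `Γ` -/

/-- The integrand of `gammaA`, as a function of `(y, z)`; it vanishes unless `y < z`. -/
noncomputable def gammaIntegrand (u : ℝ → ℝ → ℝ) (A : Set ℝ) (y z : ℝ) : ℝ :=
  if y < z then
    max (∫ x in A ∩ Icc 0 y, (u x z - u x y)) 0 + max (∫ x in A ∩ Icc z 1, (u x y - u x z)) 0
  else 0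

namespace IsUnitKernel

variable {u : ℝ → ℝ → ℝ}

lemma measurable_gammaIntegrand (hu : IsUnitKernel u) {A : Set ℝ} (hA : MeasurableSet A) :
    Measurable (Function.uncurry (gammaIntegrand u A)) := by
  have hxz : Measurable fun q : (ℝ × ℝ) × ℝ => u q.2 q.1.2 :=
    hu.meas.comp (measurable_snd.prodMk (measurable_snd.comp measurable_fst))
  have hxy : Measurable fun q : (ℝ × ℝ) × ℝ => u q.2 q.1.1 :=
    hu.meas.comp (measurable_snd.prodMk (measurable_fst.comp measurable_fst))
  have hA' : MeasurableSet {q : (ℝ × ℝ) × ℝ | q.2 ∈ A} := measurable_snd hA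
  have h1 : Measurable fun p : ℝ × ℝ => ∫ x in A ∩ Icc 0 p.1, (u x p.2 - u x p.1) := by
    have hs : MeasurableSet {q : (ℝ × ℝ) × ℝ | q.2 ∈ A ∧ (0 ≤ q.2 ∧ q.2 ≤ q.1.1)} :=
      hA'.inter ((measurableSet_le measurable_const measurable_snd).inter
        (measurableSet_le measurable_snd (measurable_fst.comp measurable_fst)))
    have := ((hxz.sub hxy).indicator hs).stronglyMeasurable.integral_prod_right' (ν := volume)
    convert this.measurable using 2 with p
    rw [← integral_indicator (hA.inter measurableSet_Icc)]
    rfl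
  have h2 : Measurable fun p : ℝ × ℝ => ∫ x in A ∩ Icc p.2 1, (u x p.1 - u x p.2) := by
    have hs : MeasurableSet {q : (ℝ × ℝ) × ℝ | q.2 ∈ A ∧ (q.1.2 ≤ q.2 ∧ q.2 ≤ 1)} :=
      hA'.inter ((measurableSet_le (measurable_snd.comp measurable_fst) measurable_snd).inter
        (measurableSet_le measurable_snd measurable_const))
    have := ((hxy.sub hxz).indicator hs).stronglyMeasurable.integral_prod_right' (ν := volume)
    convert this.measurable using 2 with p
    rw [← integral_indicator (hA.inter measurableSet_Icc)]
    rfl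
  exact Measurable.ite (measurableSet_lt measurable_fst measurable_snd)
    ((h1.max measurable_const).add (h2.max measurable_const)) measurable_const

lemma gammaIntegrand_nonneg (A : Set ℝ) (y z : ℝ) : 0 ≤ gammaIntegrand u A y z := by
  unfold gammaIntegrand; split_ifs
  · positivity
  · rfl

lemma gammaIntegrand_le (hu : IsUnitKernel u) {A : Set ℝ} (hA : A ⊆ Icc 0 1) (y z : ℝ) :
    gammaIntegrand u A y z ≤ 2 := by
  have key : ∀ (B : Set ℝ) (a b : ℝ), B ⊆ A → max (∫ x in B, (u x a - u x b)) 0 ≤ 1 := by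
    intro B a b hB
    refine max_le ((le_abs_self _).trans ?_) zero_le_one
    have := norm_setIntegral_le_of_norm_le_const (μ := volume) (s := B)
      (f := fun x => u x a - u x b) (C := 1) (vol_lt_top (hB.trans hA)) (fun x _ => by
        have h1 := hu.nonneg x a
        have h2 := hu.nonneg x b
        have h3 := hu.le_one x a
        have h4 := hu.le_one x b
        rw [Real.norm_eq_abs, _root_.abs_le]; constructor <;> linarith)
    have h := vol_le_one (hB.trans hA)
    rw [Real.norm_eq_abs] at this
    linarith
  unfold gammaIntegrand; split_ifs
  · linarith [key (A ∩ Icc 0 y) z y inter_subset_left, key (A ∩ Icc z 1) y z inter_subset_left]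
  · norm_num

lemma abs_gammaIntegrand_le (hu : IsUnitKernel u) {A : Set ℝ} (hA : A ⊆ Icc 0 1) (y z : ℝ) :
    |gammaIntegrand u A y z| ≤ 2 := by
  rw [abs_of_nonneg (gammaIntegrand_nonneg A y z)]; exact hu.gammaIntegrand_le hA y z

lemma gammaA_le_Gamma (hu : IsUnitKernel u) {A : Set ℝ} (hAm : MeasurableSet A)
    (hA : A ⊆ Icc 0 1) : gammaA u A ≤ Gamma u := by
  refine le_csSup ⟨2, ?_⟩ ⟨A, hAm, hA, rfl⟩
  rintro r ⟨A, -, hA, rfl⟩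
  refine (le_abs_self _).trans ?_
  have h1 : ∀ y, ‖∫ z in Icc (0:ℝ) 1, gammaIntegrand u A y z‖ ≤ 2 := fun y => by
    simpa using norm_setIntegral_le_of_norm_le_const (μ := volume) (s := Icc (0:ℝ) 1)
      (f := gammaIntegrand u A y) (C := 2) (by simp) (fun z _ => hu.abs_gammaIntegrand_le hA y z)
  have h2 := norm_setIntegral_le_of_norm_le_const (μ := volume) (s := Icc (0:ℝ) 1)
    (f := fun y => ∫ z in Icc (0:ℝ) 1, gammaIntegrand u A y z) (C := 2) (by simp)
    (fun y _ => h1 y)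
  simp only [Real.volume_real_Icc, sub_zero, zero_le_one, sup_of_le_left, mul_one] at h2
  exact h2

/-- Restricting the integration defining `gammaA u A` to a rectangle `B × C`, and bounding the
integrand from below there by `s * (g z - g y)`, where `g y` is the integral of `u` over
`A × {y}`. The sign `s` distinguishes the two halves of the integrand. -/
lemma lower_bound (hu : IsUnitKernel u) {A B C : Set ℝ} (hAm : MeasurableSet A)
    (hBm : MeasurableSet B) (hCm : MeasurableSet C) (hA : A ⊆ Icc 0 1) (hB : B ⊆ Icc 0 1)
    (hC : C ⊆ Icc 0 1) {s : ℝ}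
    (h : ∀ y ∈ B, ∀ z ∈ C,
      s * ((∫ x in A, u x z) - ∫ x in A, u x y) ≤ gammaIntegrand u A y z) :
    s * (volume.real B * rectInt u A C - volume.real C * rectInt u A B) ≤ Gamma u := by
  refine le_trans ?_ (hu.gammaA_le_Gamma hAm hA)
  set g : ℝ → ℝ := fun y => ∫ x in A, u x y with hg
  have hgm : Measurable g :=
    (hu.meas.comp measurable_swap).stronglyMeasurable.integral_prod_right'.measurable
  have hgb : ∀ y, |g y| ≤ 1 := fun y => by
    have := norm_setIntegral_le_of_norm_le_const (μ := volume) (s := A)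
      (f := fun x => u x y) (C := 1) (vol_lt_top hA) (fun x _ => hu.abs_le x y)
    rw [Real.norm_eq_abs] at this
    linarith [vol_le_one hA]
  have hgi : ∀ {S : Set ℝ}, S ⊆ Icc 0 1 → IntegrableOn g S := fun hS =>
    Measure.integrableOn_of_bounded (M := 1) (vol_lt_top hS).ne hgm.aestronglyMeasurable
      (ae_of_all _ hgb)
  have hrect : ∀ {S : Set ℝ}, S ⊆ Icc 0 1 → rectInt u A S = ∫ y in S, g y := fun {S} hS => by
    rw [hu.rectInt_swap hA hS]
    simp only [rectInt, hg]
    simp_rw [hu.symm]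
  have hfull : gammaA u A = rectInt (gammaIntegrand u A) (Icc 0 1) (Icc 0 1) := rfl
  have hgm' := hu.measurable_gammaIntegrand hAm
  have hgb' : ∀ x ∈ Icc (0 : ℝ) 1, ∀ y ∈ Icc (0 : ℝ) 1, |gammaIntegrand u A x y| ≤ 2 :=
    fun x _ y _ => hu.abs_gammaIntegrand_le hA x y
  rw [hfull, rectInt_eq_prod hgm' hgb' subset_rfl subset_rfl]
  have hdm : Measurable (Function.uncurry fun y z => s * (g z - g y)) :=
    ((hgm.comp measurable_snd).sub (hgm.comp measurable_fst)).const_mul s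
  have hdb : ∀ x ∈ Icc (0 : ℝ) 1, ∀ y ∈ Icc (0 : ℝ) 1, |s * (g y - g x)| ≤ |s| * 2 := by
    intro x _ y _
    rw [abs_mul]
    refine mul_le_mul_of_nonneg_left ?_ (abs_nonneg s)
    have := abs_sub (g y) (g x)
    linarith [hgb x, hgb y]
  have hval : s * (volume.real B * rectInt u A C - volume.real C * rectInt u A B)
      = rectInt (fun y z => s * (g z - g y)) B C := by
    rw [hrect hC, hrect hB]
    unfold rectInt
    have : ∀ y, ∫ z in C, s * (g z - g y) = s * ((∫ z in C, g z) - volume.real C * g y) := by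
      intro y
      rw [integral_const_mul, integral_sub (hgi hC)
        (integrableOn_const (vol_lt_top hC).ne), setIntegral_const, smul_eq_mul]
    simp_rw [this]
    rw [integral_const_mul, integral_sub
      (integrable_const_iff.2 (Or.inr ⟨by simpa using vol_lt_top hB⟩))
      ((hgi hB).const_mul _), setIntegral_const, smul_eq_mul, integral_const_mul]
  rw [hval, rectInt_eq_prod hdm hdb hB hC]
  calc _ ≤ ∫ p in B ×ˢ C, Function.uncurry (gammaIntegrand u A) p ∂(volume.prod volume) := by
        refine setIntegral_mono_on (integrableOn_rect hdm hdb hB hC)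
          (integrableOn_rect hgm' hgb' hB hC) (hBm.prod hCm) ?_
        rintro ⟨y, z⟩ ⟨hy, hz⟩
        exact h y hy z hz
    _ ≤ _ := by
        refine setIntegral_mono_set (integrableOn_rect hgm' hgb' subset_rfl subset_rfl)
          (ae_of_all _ fun p => gammaIntegrand_nonneg A p.1 p.2)
          (LE.le.eventuallyLE (prod_mono hB hC))

/-- Seen from a set `A` on the left, the average of the kernel over `A × C` is at most
its average over `A × B`, up to an error controlled by `Gamma u`. -/
lemma left_bound (hu : IsUnitKernel u) {A B C : Set ℝ} (hAm : MeasurableSet A)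
    (hBm : MeasurableSet B) (hCm : MeasurableSet C) (hA : A ⊆ Icc 0 1) (hB : B ⊆ Icc 0 1)
    (hC : C ⊆ Icc 0 1) (hAB : ∀ x ∈ A, ∀ y ∈ B, x < y) (hBC : ∀ y ∈ B, ∀ z ∈ C, y < z) :
    volume.real B * rectInt u A C ≤ volume.real C * rectInt u A B + Gamma u := by
  have := hu.lower_bound (s := 1) hAm hBm hCm hA hB hC (by
    intro y hy z hz
    have hAy : A ∩ Icc 0 y = A :=
      inter_eq_left.2 fun x hx => ⟨(hA hx).1, (hAB x hx y hy).le⟩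
    rw [gammaIntegrand, if_pos (hBC y hy z hz), hAy,
      integral_sub (hu.integrable_slice z hA) (hu.integrable_slice y hA), one_mul]
    exact (le_max_left _ _).trans (le_add_of_nonneg_right (le_max_right _ _)))
  linarith

/-- Seen from a set `A` on the right, the average of the kernel over `A × B` is at most
its average over `A × C`, up to an error controlled by `Gamma u`. -/
lemma right_bound (hu : IsUnitKernel u) {A B C : Set ℝ} (hAm : MeasurableSet A)
    (hBm : MeasurableSet B) (hCm : MeasurableSet C) (hA : A ⊆ Icc 0 1) (hB : B ⊆ Icc 0 1)
    (hC : C ⊆ Icc 0 1) (hCA : ∀ z ∈ C, ∀ x ∈ A, z < x) (hBC : ∀ y ∈ B, ∀ z ∈ C, y < z) :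
    volume.real C * rectInt u A B ≤ volume.real B * rectInt u A C + Gamma u := by
  have := hu.lower_bound (s := -1) hAm hBm hCm hA hB hC (by
    intro y hy z hz
    have hAz : A ∩ Icc z 1 = A :=
      inter_eq_left.2 fun x hx => ⟨(hCA z hz x hx).le, (hA hx).2⟩
    rw [gammaIntegrand, if_pos (hBC y hy z hz), hAz,
      integral_sub (hu.integrable_slice y hA) (hu.integrable_slice z hA), neg_one_mul, neg_sub]
    exact (le_max_left _ _).trans (le_add_of_nonneg_left (le_max_right _ _)))
  linarith

lemma Gamma_nonneg (hu : IsUnitKernel u) : 0 ≤ Gamma u :=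
  (rectInt_nonneg' (gammaIntegrand_nonneg (u := u) ∅) _ _).trans
    (hu.gammaA_le_Gamma MeasurableSet.empty (empty_subset _))
where rectInt_nonneg' {f : ℝ → ℝ → ℝ} (hf : ∀ x y, 0 ≤ f x y) (S T : Set ℝ) :
    0 ≤ rectInt f S T := integral_nonneg fun x => integral_nonneg fun y => hf x y

/-- For sets lying in the order `A' < A < B < B'`, the average of `u` over the outer rectangle
`A' × B'` exceeds its average over the inner rectangle `A × B` at most by an amount controlled by
`Gamma u`: pass from `A' × B'` to `A' × B` and then to `A × B`. Both sides are multiplied by the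
measures of all four sets, so that sets of measure `0` are allowed. -/
lemma nested_bound (hu : IsUnitKernel u) {A' A B B' : Set ℝ} (hA'm : MeasurableSet A')
    (hAm : MeasurableSet A) (hBm : MeasurableSet B) (hB'm : MeasurableSet B')
    (hA' : A' ⊆ Icc 0 1) (hA : A ⊆ Icc 0 1) (hB : B ⊆ Icc 0 1) (hB' : B' ⊆ Icc 0 1)
    (h1 : ∀ x ∈ A', ∀ y ∈ A, x < y) (h2 : ∀ x ∈ A, ∀ y ∈ B, x < y)
    (h12 : ∀ x ∈ A', ∀ y ∈ B, x < y) (h3 : ∀ x ∈ B, ∀ y ∈ B', x < y) :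
    volume.real A * volume.real B * rectInt u A' B'
      ≤ volume.real A' * volume.real B' * rectInt u A B + 2 * Gamma u := by
  have e1 := hu.left_bound hA'm hBm hB'm hA' hB hB' h12 h3
  have e2 := hu.right_bound hBm hA'm hAm hB hA' hA h2 h1
  rw [hu.rectInt_swap hB hA', hu.rectInt_swap hB hA] at e2
  have hG := hu.Gamma_nonneg
  have f1 := mul_le_mul_of_nonneg_left e1 (measureReal_nonneg (μ := volume) (s := A))
  have f2 := mul_le_mul_of_nonneg_left e2 (measureReal_nonneg (μ := volume) (s := B'))
  have g1 := mul_le_mul_of_nonneg_right (vol_le_one hA) hG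
  have g2 := mul_le_mul_of_nonneg_right (vol_le_one hB') hG
  linarith

end IsUnitKernel

/-! ### Uniform grids -/

/-- For `i < K`, the `i`-th (counting from zero) of the `K` half-open intervals of length `1 / K`
that partition `(0,1]`. -/
def cell (K i : ℕ) : Set ℝ := Ioc ((i : ℝ) / K) (((i : ℝ) + 1) / K)

lemma measurableSet_cell (K i : ℕ) : MeasurableSet (cell K i) := measurableSet_Ioc

lemma cell_subset {K i : ℕ} (h : i < K) : cell K i ⊆ Icc 0 1 := by
  have hK : (0 : ℝ) < K := by exact_mod_cast (Nat.zero_le i).trans_lt h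
  have h' : (i : ℝ) + 1 ≤ K := by exact_mod_cast h
  rintro x ⟨h1, h2⟩
  exact ⟨(div_nonneg (Nat.cast_nonneg i) hK.le).trans h1.le, h2.trans ((div_le_one hK).2 h')⟩

lemma volume_cell (K i : ℕ) : volume.real (cell K i) = 1 / (K : ℝ) := by
  have : (i : ℝ) / K ≤ ((i : ℝ) + 1) / K :=
    div_le_div_of_nonneg_right (by linarith) (Nat.cast_nonneg K)
  rw [cell, Real.volume_real_Ioc_of_le this]
  ring

lemma cell_lt {K L i j : ℕ} (h : ((i : ℝ) + 1) / K ≤ (j : ℝ) / L) :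
    ∀ x ∈ cell K i, ∀ y ∈ cell L j, x < y :=
  fun _ hx _ hy => (hx.2.trans h).trans_lt hy.1

lemma cell_lt_cell {K i j : ℕ} (h : i < j) : ∀ x ∈ cell K i, ∀ y ∈ cell K j, x < y := by
  refine cell_lt (div_le_div_of_nonneg_right ?_ (Nat.cast_nonneg K))
  exact_mod_cast h

lemma cell_disjoint {K i j : ℕ} (h : i ≠ j) : Disjoint (cell K i) (cell K j) := by
  refine Set.disjoint_left.2 fun x hi hj => ?_
  rcases lt_or_gt_of_ne h with h | h
  · exact (cell_lt_cell h x hi x hj).false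
  · exact (cell_lt_cell h x hj x hi).false

lemma exists_cell {K : ℕ} (hK : 0 < K) {x : ℝ} (h0 : 0 < x) (h1 : x ≤ 1) :
    ∃ i < K, x ∈ cell K i := by
  have hK' : (0 : ℝ) < K := by exact_mod_cast hK
  have hc : 0 < ⌈(K : ℝ) * x⌉₊ := Nat.ceil_pos.2 (by positivity)
  obtain ⟨i, hi⟩ := Nat.exists_eq_succ_of_ne_zero hc.ne'
  have hle : ⌈(K : ℝ) * x⌉₊ ≤ K := Nat.ceil_le.2 (by nlinarith)
  refine ⟨i, by omega, ?_, ?_⟩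
  · have : (i : ℝ) < K * x := Nat.lt_ceil.1 (by omega)
    rw [div_lt_iff₀ hK']; linarith
  · have := Nat.le_ceil ((K : ℝ) * x)
    rw [hi] at this
    push_cast at this
    rw [le_div_iff₀ hK']; linarith

lemma setIntegral_eq_sum_cell {K : ℕ} (hK : 0 < K) {g : ℝ → ℝ} {S : Set ℝ}
    (hSm : MeasurableSet S) (hS : S ⊆ Icc 0 1) (hg : IntegrableOn g (Icc 0 1)) :
    ∫ x in S, g x = ∑ i ∈ Finset.range K, ∫ x in S ∩ cell K i, g x := by
  have hunion : (S ∩ Ioc 0 1 : Set ℝ) = ⋃ i ∈ Finset.range K, S ∩ cell K i := by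
    ext x
    simp only [mem_inter_iff, mem_iUnion, Finset.mem_range, exists_prop]
    constructor
    · rintro ⟨hx, h0, h1⟩
      obtain ⟨i, hi, hxi⟩ := exists_cell hK h0 h1
      exact ⟨i, hi, hx, hxi⟩
    · rintro ⟨i, hi, hx, hxi⟩
      refine ⟨hx, ?_, (hS hx).2⟩
      exact (div_nonneg (Nat.cast_nonneg i) (Nat.cast_nonneg K)).trans_lt hxi.1
  rw [← integral_biUnion_finset (Finset.range K)
    (fun i _ => hSm.inter (measurableSet_cell K i))
    (fun i _ j _ hij => (cell_disjoint hij).mono inter_subset_right inter_subset_right)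
    (fun i _ => hg.mono_set (inter_subset_left.trans hS)), ← hunion]
  -- The two domains of integration differ at most by the point `0`.
  refine setIntegral_congr_set ?_
  have h : (Icc (0 : ℝ) 1 : Set ℝ) =ᵐ[volume] (Ioc 0 1 : Set ℝ) := Ioc_ae_eq_Icc.symm
  have := (ae_eq_refl S).inter h
  rwa [inter_eq_left.2 hS] at this

lemma integrableOn_inner {f : ℝ → ℝ → ℝ} (hf : IsUnitKernel f) {T : Set ℝ} (hT : T ⊆ Icc 0 1) :
    IntegrableOn (fun x => ∫ y in T, f x y) (Icc 0 1) := by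
  have := integrableOn_rect hf.meas (fun x _ y _ => hf.abs_le x y)
    (subset_refl (Icc (0:ℝ) 1)) hT
  rw [IntegrableOn, ← Measure.prod_restrict] at this
  exact this.integral_prod_left

lemma rectInt_eq_sum {K : ℕ} (hK : 0 < K) {f : ℝ → ℝ → ℝ} (hf : IsUnitKernel f) {S T : Set ℝ}
    (hSm : MeasurableSet S) (hTm : MeasurableSet T) (hS : S ⊆ Icc 0 1) (hT : T ⊆ Icc 0 1) :
    rectInt f S T = ∑ i ∈ Finset.range K, ∑ j ∈ Finset.range K,
      rectInt f (S ∩ cell K i) (T ∩ cell K j) := by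
  unfold rectInt
  rw [setIntegral_eq_sum_cell hK hSm hS (integrableOn_inner hf hT)]
  refine Finset.sum_congr rfl fun i _ => ?_
  rw [← integral_finsetSum]
  · refine integral_congr_ae (ae_of_all _ fun x => ?_)
    refine setIntegral_eq_sum_cell hK hTm hT ?_
    rw [show f x = fun y => f y x from funext (hf.symm x)]
    exact hf.integrable_slice x subset_rfl
  · intro j _
    exact (integrableOn_inner hf (inter_subset_left.trans hT)).mono_set
      (inter_subset_left.trans hS)

lemma rectInt_mono {f g : ℝ → ℝ → ℝ} (hf : IsUnitKernel f) (hg : IsUnitKernel g) {S T : Set ℝ}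
    (hSm : MeasurableSet S) (hTm : MeasurableSet T) (hS : S ⊆ Icc 0 1) (hT : T ⊆ Icc 0 1)
    (h : ∀ x ∈ S, ∀ y ∈ T, f x y ≤ g x y) : rectInt f S T ≤ rectInt g S T := by
  rw [rectInt_eq_prod hf.meas (fun x _ y _ => hf.abs_le x y) hS hT,
    rectInt_eq_prod hg.meas (fun x _ y _ => hg.abs_le x y) hS hT]
  refine setIntegral_mono_on (integrableOn_rect hf.meas (fun x _ y _ => hf.abs_le x y) hS hT)
    (integrableOn_rect hg.meas (fun x _ y _ => hg.abs_le x y) hS hT) (hSm.prod hTm) ?_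
  rintro ⟨x, y⟩ ⟨hx, hy⟩
  exact h x hx y hy

lemma isUnitKernel_const {c : ℝ} (h0 : 0 ≤ c) (h1 : c ≤ 1) : IsUnitKernel fun _ _ => c :=
  ⟨measurable_const, fun _ _ => rfl, fun _ _ => h0, fun _ _ => h1⟩

lemma rectInt_const (c : ℝ) (S T : Set ℝ) :
    rectInt (fun _ _ => c) S T = volume.real S * volume.real T * c := by
  simp [rectInt, mul_assoc]

/-! ### Block averages -/

/-- The average of `u` over the block `cell K i × cell K j`. -/
noncomputable def blockAvg (u : ℝ → ℝ → ℝ) (K i j : ℕ) : ℝ :=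
  (K : ℝ) ^ 2 * rectInt u (cell K i) (cell K j)

lemma rectInt_cell {K : ℕ} (hK : 0 < K) (u : ℝ → ℝ → ℝ) (i j : ℕ) :
    rectInt u (cell K i) (cell K j) = (1 / (K : ℝ)) ^ 2 * blockAvg u K i j := by
  have : (K : ℝ) ≠ 0 := by exact_mod_cast hK.ne'
  unfold blockAvg
  field_simp

lemma blockAvg_mem {u : ℝ → ℝ → ℝ} (hu : IsUnitKernel u) {K i j : ℕ} (hi : i < K) (hj : j < K) :
    blockAvg u K i j ∈ Icc (0 : ℝ) 1 := by
  have hK : (0 : ℝ) < K := by exact_mod_cast (Nat.zero_le i).trans_lt hi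
  have h := hu.rectInt_le (cell_subset hi) (cell_subset hj)
  rw [volume_cell, volume_cell] at h
  refine ⟨mul_nonneg (by positivity) (hu.rectInt_nonneg _ _), ?_⟩
  calc blockAvg u K i j ≤ (K : ℝ) ^ 2 * (1 / K * (1 / K)) :=
        mul_le_mul_of_nonneg_left h (by positivity)
    _ = 1 := by field_simp

/-- Block averages nearly increase from an outer block to an inner block, even between
partitions into different numbers of cells. -/
lemma blockAvg_nested {u : ℝ → ℝ → ℝ} (hu : IsUnitKernel u) {K L i j k l : ℕ}
    (h1 : ((i : ℝ) + 1) / K ≤ (k : ℝ) / L) (hkl : k < l) (hl : l < L)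
    (h2 : ((l : ℝ) + 1) / L ≤ (j : ℝ) / K) (hi : i < K) (hj : j < K) :
    blockAvg u K i j ≤ blockAvg u L k l + (K : ℝ) ^ 2 * (L : ℝ) ^ 2 * (2 * Gamma u) := by
  have hK : (0 : ℝ) < K := by exact_mod_cast (Nat.zero_le i).trans_lt hi
  have hL : (0 : ℝ) < L := by exact_mod_cast (Nat.zero_le l).trans_lt hl
  have hk : k < L := hkl.trans hl
  have h1' : ((i : ℝ) + 1) / K ≤ (l : ℝ) / L :=
    h1.trans (div_le_div_of_nonneg_right (by exact_mod_cast hkl.le) hL.le)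
  have := hu.nested_bound (measurableSet_cell K i) (measurableSet_cell L k)
    (measurableSet_cell L l) (measurableSet_cell K j) (cell_subset hi) (cell_subset hk)
    (cell_subset hl) (cell_subset hj) (cell_lt h1) (cell_lt_cell hkl) (cell_lt h1') (cell_lt h2)
  simp only [volume_cell] at this
  have h := mul_le_mul_of_nonneg_left this (by positivity : (0 : ℝ) ≤ (K : ℝ) ^ 2 * (L : ℝ) ^ 2)
  unfold blockAvg
  calc _ = (K : ℝ) ^ 2 * (L : ℝ) ^ 2 * (1 / L * (1 / L) * rectInt u (cell K i) (cell K j)) := by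
        field_simp
    _ ≤ _ := h
    _ = _ := by field_simp

/-! ### Nested arrays and their Robinson kernels -/

/-- An array of numbers in `[0,1]`, one for each block of each uniform grid on the unit square, which
increase from outer blocks to inner blocks. Here `a K i j` belongs to the block
`cell K i × cell K j`; blocks of different grids are compared too. Entries with `i ≥ K` or `j ≥ K`
carry no meaning. -/
structure IsNestedArray (a : ℕ → ℕ → ℕ → ℝ) : Prop where
  mem : ∀ K i j, a K i j ∈ Icc (0 : ℝ) 1
  mono : ∀ {K L i j k l : ℕ}, ((i : ℝ) + 1) / K ≤ (k : ℝ) / L → k < l → l < L →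
    ((l : ℝ) + 1) / L ≤ (j : ℝ) / K → i < K → j < K → a K i j ≤ a L k l

/-- The block `cell L k × cell L l`, where `t = (L, k, l)`, lies above the diagonal and inside
the square on `(min x y, max x y)`. -/
def IsInner (t : ℕ × ℕ × ℕ) (x y : ℝ) : Prop :=
  (t.2.1 < t.2.2 ∧ t.2.2 < t.1) ∧
    min x y ≤ (t.2.1 : ℝ) / t.1 ∧ ((t.2.2 : ℝ) + 1) / t.1 ≤ max x y

open Classical in
/-- The infimum of `a` over the blocks between `x` and `y`, and `1` if there are none. A wider gap
between `x` and `y` contains more blocks, so this kernel is Robinson for every array `a` with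
values in `[0,1]`. -/
noncomputable def innerInf (a : ℕ → ℕ → ℕ → ℝ) (x y : ℝ) : ℝ :=
  ⨅ t : ℕ × ℕ × ℕ, if IsInner t x y then a t.1 t.2.1 t.2.2 else 1

namespace IsNestedArray

variable {a : ℕ → ℕ → ℕ → ℝ}

open Classical in
lemma bddBelow (ha : IsNestedArray a) (x y : ℝ) :
    BddBelow (range fun t : ℕ × ℕ × ℕ => if IsInner t x y then a t.1 t.2.1 t.2.2 else 1) := by
  refine ⟨0, ?_⟩
  rintro _ ⟨t, rfl⟩
  dsimp only
  split_ifs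
  · exact (ha.mem _ _ _).1
  · exact zero_le_one

lemma innerInf_le (ha : IsNestedArray a) {x y : ℝ} {t : ℕ × ℕ × ℕ} (h : IsInner t x y) :
    innerInf a x y ≤ a t.1 t.2.1 t.2.2 := by
  classical
  have := ciInf_le (ha.bddBelow x y) t
  rwa [if_pos h] at this

lemma le_innerInf {x y c : ℝ} (hc : c ≤ 1) (h : ∀ t, IsInner t x y → c ≤ a t.1 t.2.1 t.2.2) :
    c ≤ innerInf a x y := by
  classical
  refine le_ciInf fun t => ?_
  split_ifs with ht
  · exact h t ht
  · exact hc

lemma innerInf_le_one (ha : IsNestedArray a) (x y : ℝ) : innerInf a x y ≤ 1 := by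
  classical
  have := ciInf_le (ha.bddBelow x y) (0, 0, 0)
  rwa [if_neg (by simp [IsInner])] at this

lemma isUnitKernel_innerInf (ha : IsNestedArray a) : IsUnitKernel (innerInf a) := by
  classical
  refine ⟨?_, ?_, ?_, ha.innerInf_le_one⟩
  · have hx : Measurable fun p : ℝ × ℝ => min p.1 p.2 := measurable_fst.min measurable_snd
    have hy : Measurable fun p : ℝ × ℝ => max p.1 p.2 := measurable_fst.max measurable_snd
    have h : ∀ t : ℕ × ℕ × ℕ, Measurable fun p : ℝ × ℝ =>
        if IsInner t p.1 p.2 then a t.1 t.2.1 t.2.2 else 1 := fun t =>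
      Measurable.ite ((MeasurableSet.const _).inter
        ((measurableSet_le hx measurable_const).inter (measurableSet_le measurable_const hy)))
        measurable_const measurable_const
    exact Measurable.iInf h
  · intro x y
    refine iInf_congr fun t => if_congr ?_ rfl rfl
    rw [IsInner, IsInner, min_comm x y, max_comm x y]
  · intro x y
    exact le_innerInf zero_le_one fun t _ => (ha.mem _ _ _).1

lemma isRobinson_innerInf (ha : IsNestedArray a) : IsRobinson (innerInf a) := by
  intro x y z _ hxy hyz _
  refine le_min (le_innerInf (ha.innerInf_le_one x z) fun t ht => ha.innerInf_le ?_)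
    (le_innerInf (ha.innerInf_le_one x z) fun t ht => ha.innerInf_le ?_)
  · refine ⟨ht.1, ?_, ?_⟩
    · rw [min_eq_left (hxy.trans hyz), ← min_eq_left hxy]; exact ht.2.1
    · rw [max_eq_right (hxy.trans hyz)]
      exact (ht.2.2.trans_eq (max_eq_right hxy)).trans hyz
  · refine ⟨ht.1, ?_, ?_⟩
    · rw [min_eq_left (hxy.trans hyz)]
      exact hxy.trans ((min_eq_left hyz).symm.trans_le ht.2.1)
    · rw [max_eq_right (hxy.trans hyz), ← max_eq_right hyz]; exact ht.2.2

/-- On the block `cell K (p+1) × cell K (q+1)` the kernel `innerInf a` is at most the entry of the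
next inner block. -/
lemma innerInf_le_cell (ha : IsNestedArray a) {K p q : ℕ} (hpq : p + 3 ≤ q) (hq : q + 2 < K)
    {x y : ℝ} (hx : x ∈ cell K (p + 1)) (hy : y ∈ cell K (q + 1)) :
    innerInf a x y ≤ a K (p + 2) q := by
  have hxy : x ≤ y := (cell_lt_cell (by omega) x hx y hy).le
  refine ha.innerInf_le (t := (K, p + 2, q)) ⟨⟨by dsimp only; omega, by dsimp only; omega⟩, ?_, ?_⟩
  · rw [min_eq_left hxy]
    refine hx.2.trans (le_of_eq ?_)
    push_cast; ring
  · rw [max_eq_right hxy]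
    refine le_trans (le_of_eq ?_) hy.1.le
    push_cast; ring

/-- On the block `cell K (p+1) × cell K (q+1)` the kernel `innerInf a` is at least the entry of
the next outer block. -/
lemma le_innerInf_cell (ha : IsNestedArray a) {K p q : ℕ} (hpq : p + 3 ≤ q) (hq : q + 2 < K)
    {x y : ℝ} (hx : x ∈ cell K (p + 1)) (hy : y ∈ cell K (q + 1)) :
    a K p (q + 2) ≤ innerInf a x y := by
  have hxy : x ≤ y := (cell_lt_cell (by omega) x hx y hy).le
  refine le_innerInf (ha.mem _ _ _).2 fun t ht => ?_
  have h1 := ht.2.1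
  have h2 := ht.2.2
  rw [min_eq_left hxy] at h1
  rw [max_eq_right hxy] at h2
  refine ha.mono ?_ ht.1.1 ht.1.2 ?_ (by omega) hq
  · refine le_trans ?_ (hx.1.le.trans h1)
    push_cast; rfl
  · refine (h2.trans hy.2).trans (le_of_eq ?_)
    push_cast; ring

end IsNestedArray

/-! ### Summing the gaps between inner and outer blocks -/

/-- The blocks of the `K × K` grid, away from the diagonal and the sides of the triangle above the
diagonal, that have both an inner and an outer neighbour. The pair `(p, q)` stands for the block
`cell K (p+1) × cell K (q+1)`. -/
def goodBlocks (K : ℕ) : Finset (ℕ × ℕ) :=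
  (Finset.range K ×ˢ Finset.range K).filter fun t => t.1 + 3 ≤ t.2 ∧ t.2 + 2 < K

/-- The gap between the inner and outer neighbours of a block, or the trivial bound `1` on the
other blocks on or above the diagonal; `0` strictly below the diagonal. -/
noncomputable def blockGap (a : ℕ → ℕ → ℕ → ℝ) (K i j : ℕ) : ℝ :=
  if 1 ≤ i ∧ i + 3 ≤ j ∧ j + 1 < K then a K (i + 1) (j - 1) - a K (i - 1) (j + 1)
  else if i ≤ j then 1 else 0

namespace IsNestedArray

variable {a : ℕ → ℕ → ℕ → ℝ}

lemma blockGap_nonneg (ha : IsNestedArray a) (K i j : ℕ) : 0 ≤ blockGap a K i j := by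
  unfold blockGap
  split_ifs with h1 h2
  · obtain ⟨h1, h2, h3⟩ := h1
    have hK : (0 : ℝ) ≤ K := Nat.cast_nonneg K
    refine sub_nonneg.2 (ha.mono ?_ (by omega) (by omega) ?_ (by omega) (by omega))
    · refine div_le_div_of_nonneg_right ?_ hK
      exact_mod_cast (by omega : i - 1 + 1 ≤ i + 1)
    · refine div_le_div_of_nonneg_right ?_ hK
      exact_mod_cast (by omega : j - 1 + 1 ≤ j + 1)
  · exact zero_le_one
  · rfl

/-- The inner neighbours of the good blocks are, but for the `4 K` blocks closest to the diagonal,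
also outer neighbours of good blocks. Hence the sum of the gaps over the good blocks telescopes to
`O(K)`, although there are about `K² / 2` of them. -/
lemma sum_good_le (ha : IsNestedArray a) (K : ℕ) :
    ∑ t ∈ goodBlocks K, a K (t.1 + 2) t.2 ≤ ∑ t ∈ goodBlocks K, a K t.1 (t.2 + 2) + 4 * K := by
  set near : Finset (ℕ × ℕ) :=
    (Finset.range K ×ˢ Finset.range 4).image fun t => (t.1, t.1 + 1 + t.2) with hnear
  have hcard : (near.card : ℝ) ≤ 4 * K := by
    have : near.card ≤ K * 4 := by
      refine Finset.card_image_le.trans ?_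
      rw [Finset.card_product, Finset.card_range, Finset.card_range]
    have h : (near.card : ℝ) ≤ (K : ℝ) * 4 := by exact_mod_cast this
    linarith
  have hin : ∑ t ∈ goodBlocks K, a K (t.1 + 2) t.2
      = ∑ s ∈ (goodBlocks K).image (fun t => (t.1 + 2, t.2)), a K s.1 s.2 := by
    rw [Finset.sum_image]
    rintro ⟨p, q⟩ _ ⟨p', q'⟩ _ h
    simp only [Prod.mk.injEq] at h ⊢
    omega
  have hout : ∑ t ∈ goodBlocks K, a K t.1 (t.2 + 2)
      = ∑ s ∈ (goodBlocks K).image (fun t => (t.1, t.2 + 2)), a K s.1 s.2 := by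
    rw [Finset.sum_image]
    rintro ⟨p, q⟩ _ ⟨p', q'⟩ _ h
    simp only [Prod.mk.injEq] at h ⊢
    omega
  have hsub : (goodBlocks K).image (fun t => (t.1 + 2, t.2))
      ⊆ (goodBlocks K).image (fun t => (t.1, t.2 + 2)) ∪ near := by
    rintro ⟨p, q⟩ h
    simp only [goodBlocks, hnear, Finset.mem_image, Finset.mem_filter, Finset.mem_product,
      Finset.mem_range, Prod.exists, Prod.mk.injEq, Finset.mem_union] at h ⊢
    obtain ⟨p', q', h, rfl, rfl⟩ := h
    by_cases hn : q' ≤ p' + 2 + 4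
    · exact Or.inr ⟨p' + 2, q' - (p' + 3), by omega, by omega, by omega⟩
    · exact Or.inl ⟨p' + 2, q' - 2, by omega, by omega, by omega⟩
  rw [hin, hout]
  calc _ ≤ ∑ s ∈ (goodBlocks K).image (fun t => (t.1, t.2 + 2)) ∪ near, a K s.1 s.2 :=
        Finset.sum_le_sum_of_subset_of_nonneg hsub fun s _ _ => (ha.mem _ _ _).1
    _ ≤ ∑ s ∈ (goodBlocks K).image (fun t => (t.1, t.2 + 2)), a K s.1 s.2
          + ∑ s ∈ near, a K s.1 s.2 := by
        rw [← Finset.sum_union_inter]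
        exact le_add_of_nonneg_right (Finset.sum_nonneg fun s _ => (ha.mem _ _ _).1)
    _ ≤ _ := by
        gcongr
        calc ∑ s ∈ near, a K s.1 s.2 ≤ ∑ s ∈ near, (1 : ℝ) :=
              Finset.sum_le_sum fun s _ => (ha.mem _ _ _).2
          _ ≤ 4 * K := by simpa using hcard

lemma sum_blockGap_le (ha : IsNestedArray a) (K : ℕ) :
    ∑ i ∈ Finset.range K, ∑ j ∈ Finset.range K, blockGap a K i j ≤ 9 * K := by
  rw [← Finset.sum_product' (Finset.range K) (Finset.range K) (blockGap a K)]
  rw [← Finset.sum_filter_add_sum_filter_not _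
    (fun t : ℕ × ℕ => 1 ≤ t.1 ∧ t.1 + 3 ≤ t.2 ∧ t.2 + 1 < K)]
  have h1 : ∑ t ∈ (Finset.range K ×ˢ Finset.range K).filter
      (fun t : ℕ × ℕ => 1 ≤ t.1 ∧ t.1 + 3 ≤ t.2 ∧ t.2 + 1 < K), blockGap a K t.1 t.2
      = ∑ t ∈ goodBlocks K, (a K (t.1 + 2) t.2 - a K t.1 (t.2 + 2)) := by
    symm
    refine Finset.sum_nbij' (fun t => (t.1 + 1, t.2 + 1)) (fun t => (t.1 - 1, t.2 - 1))
      ?_ ?_ ?_ ?_ ?_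
    · rintro ⟨p, q⟩ h
      simp only [goodBlocks, Finset.mem_filter, Finset.mem_product, Finset.mem_range] at h ⊢
      omega
    · rintro ⟨p, q⟩ h
      simp only [goodBlocks, Finset.mem_filter, Finset.mem_product, Finset.mem_range] at h ⊢
      omega
    · rintro ⟨p, q⟩ h
      rfl
    · rintro ⟨p, q⟩ h
      simp only [Finset.mem_filter, Finset.mem_product, Finset.mem_range] at h
      simp only [Prod.mk.injEq]
      omega
    · rintro ⟨p, q⟩ h
      simp only [goodBlocks, Finset.mem_filter, Finset.mem_product, Finset.mem_range] at h
      dsimp only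
      rw [blockGap, if_pos (by omega)]
      rfl
  have h2 : ∑ t ∈ (Finset.range K ×ˢ Finset.range K).filter
      (fun t : ℕ × ℕ => ¬ (1 ≤ t.1 ∧ t.1 + 3 ≤ t.2 ∧ t.2 + 1 < K)), blockGap a K t.1 t.2
      ≤ 5 * K := by
    -- A block on or above the diagonal that is not good lies on one of three diagonals or two sides.
    set bad : Finset (ℕ × ℕ) := (Finset.range K ×ˢ Finset.range 5).image fun t =>
      if t.2 < 3 then (t.1, t.1 + t.2) else if t.2 = 3 then (0, t.1) else (t.1, K - 1) with hbad
    have hcard : (bad.card : ℝ) ≤ 5 * K := by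
      have : bad.card ≤ K * 5 := by
        refine Finset.card_image_le.trans ?_
        rw [Finset.card_product, Finset.card_range, Finset.card_range]
      have h : (bad.card : ℝ) ≤ (K : ℝ) * 5 := by exact_mod_cast this
      linarith
    calc _ ≤ ∑ t ∈ (Finset.range K ×ˢ Finset.range K).filter
            (fun t : ℕ × ℕ => ¬ (1 ≤ t.1 ∧ t.1 + 3 ≤ t.2 ∧ t.2 + 1 < K)),
          (if t ∈ bad then (1 : ℝ) else 0) := by
          refine Finset.sum_le_sum ?_
          rintro ⟨i, j⟩ h
          simp only [Finset.mem_filter, Finset.mem_product, Finset.mem_range] at h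
          rw [blockGap, if_neg h.2]
          dsimp only
          by_cases hij : i ≤ j
          · rw [if_pos hij, if_pos]
            simp only [hbad, Finset.mem_image, Finset.mem_product, Finset.mem_range, Prod.exists]
            by_cases h3 : j < i + 3
            · have h5 : j - i < 3 := by omega
              have h6 : i + (j - i) = j := by omega
              exact ⟨i, j - i, by omega, by simp only [h5, h6, if_true]⟩
            · by_cases h4 : i = 0
              · exact ⟨j, 3, by omega, by simp [h4]⟩
              · have h5 : K - 1 = j := by omega
                exact ⟨i, 4, by omega, by simp [h5]⟩
          · rw [if_neg hij]
            split_ifs <;> norm_num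
      _ ≤ ∑ t ∈ bad, (1 : ℝ) := by
          rw [← Finset.sum_filter]
          refine Finset.sum_le_sum_of_subset_of_nonneg ?_ fun _ _ _ => zero_le_one
          exact fun t ht => (Finset.mem_filter.1 ht).2
      _ ≤ 5 * K := by simpa using hcard
  rw [h1, Finset.sum_sub_distrib]
  linarith [ha.sum_good_le K]

/-! ### Comparison with the Robinson kernel -/

/-- On parts `S × T` of a block not below the diagonal, the integrals of `u` and of `innerInf a` are
squeezed between nearly the same bounds. -/
lemma rectInt_sub_le (ha : IsNestedArray a) {u : ℝ → ℝ → ℝ} (hu : IsUnitKernel u) {K : ℕ} {δ : ℝ}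
    (hδ : ∀ i < K, ∀ j < K, |blockAvg u K i j - a K i j| ≤ δ) {i j : ℕ} (hij : i ≤ j)
    (hj : j < K) {S T : Set ℝ} (hSm : MeasurableSet S) (hTm : MeasurableSet T)
    (hS : S ⊆ cell K i) (hT : T ⊆ cell K j) :
    |rectInt u S T - rectInt (innerInf a) S T|
      ≤ (1 / (K : ℝ)) ^ 2 * blockGap a K i j
        + ((1 / (K : ℝ)) ^ 2 * δ + 2 * (K : ℝ) ^ 2 * Gamma u) := by
  have hz := ha.isUnitKernel_innerInf
  have hi : i < K := hij.trans_lt hj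
  have hK0 : 0 < K := by omega
  have hK : (0 : ℝ) < K := by exact_mod_cast hK0
  have hS1 := hS.trans (cell_subset hi)
  have hT1 := hT.trans (cell_subset hj)
  have hG := hu.Gamma_nonneg
  have hδ0 : 0 ≤ δ := (abs_nonneg _).trans (hδ i hi j hj)
  have hvS : volume.real S ≤ 1 / K := by
    rw [← volume_cell K i]; exact measureReal_mono hS (vol_lt_top (cell_subset hi)).ne
  have hvT : volume.real T ≤ 1 / K := by
    rw [← volume_cell K j]; exact measureReal_mono hT (vol_lt_top (cell_subset hj)).ne
  have hvS0 : 0 ≤ volume.real S := measureReal_nonneg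
  have hvT0 : 0 ≤ volume.real T := measureReal_nonneg
  set v := volume.real S * volume.real T with hv
  have hv0 : 0 ≤ v := mul_nonneg hvS0 hvT0
  have hvle : v ≤ (1 / (K : ℝ)) ^ 2 := by
    rw [sq]; exact mul_le_mul hvS hvT hvT0 (by positivity)
  have herr : 0 ≤ 2 * (K : ℝ) ^ 2 * Gamma u := by positivity
  have herr' : 0 ≤ (1 / (K : ℝ)) ^ 2 * δ := by positivity
  have hscale : (K : ℝ) ^ 2 * (1 / (K : ℝ)) ^ 2 = 1 := by field_simp
  unfold blockGap
  rw [if_pos hij]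
  split_ifs with hgood
  · obtain ⟨p, rfl⟩ : ∃ p, i = p + 1 := ⟨i - 1, by omega⟩
    obtain ⟨q, rfl⟩ : ∃ q, j = q + 1 := ⟨j - 1, by omega⟩
    have hpq : p + 3 ≤ q := by omega
    have hq : q + 2 < K := by omega
    simp only [Nat.add_sub_cancel, add_assoc, Nat.reduceAdd]
    set ap := a K (p + 2) q with hap
    set am := a K p (q + 2) with ham
    have z1 : rectInt (innerInf a) S T ≤ v * ap := by
      have := rectInt_mono hz (isUnitKernel_const (ha.mem K (p + 2) q).1 (ha.mem K (p + 2) q).2)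
        hSm hTm hS1 hT1 fun x hx y hy => ha.innerInf_le_cell hpq hq (hS hx) (hT hy)
      rwa [rectInt_const] at this
    have z2 : v * am ≤ rectInt (innerInf a) S T := by
      have := rectInt_mono (isUnitKernel_const (ha.mem K p (q + 2)).1 (ha.mem K p (q + 2)).2) hz
        hSm hTm hS1 hT1 fun x hx y hy => ha.le_innerInf_cell hpq hq (hS hx) (hT hy)
      rwa [rectInt_const] at this
    have u1 : rectInt u S T ≤ v * (ap + δ) + 2 * (K : ℝ) ^ 2 * Gamma u := by
      have h := hu.nested_bound hSm (measurableSet_cell K (p + 2)) (measurableSet_cell K q) hTm hS1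
        (cell_subset (by omega)) (cell_subset (by omega)) hT1
        (fun x hx => cell_lt_cell (by omega) x (hS hx)) (cell_lt_cell (by omega))
        (fun x hx => cell_lt_cell (by omega) x (hS hx))
        (fun x hx y hy => cell_lt_cell (by omega) x hx y (hT hy))
      rw [volume_cell, volume_cell, rectInt_cell hK0, ← hv] at h
      have h' := mul_le_mul_of_nonneg_left h (by positivity : (0 : ℝ) ≤ (K : ℝ) ^ 2)
      have e1 : (K : ℝ) ^ 2 * (1 / K * (1 / K) * rectInt u S T) = rectInt u S T := by
        field_simp
      have e2 : (K : ℝ) ^ 2 * (v * ((1 / (K : ℝ)) ^ 2 * blockAvg u K (p + 2) q) + 2 * Gamma u)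
          = v * blockAvg u K (p + 2) q + 2 * (K : ℝ) ^ 2 * Gamma u := by
        field_simp
      rw [e1, e2] at h'
      have h3 : blockAvg u K (p + 2) q ≤ ap + δ := by
        linarith [(abs_le.1 (hδ (p + 2) (by omega) q (by omega))).2]
      linarith [mul_le_mul_of_nonneg_left h3 hv0]
    have u2 : v * (am - δ) - 2 * (K : ℝ) ^ 2 * Gamma u ≤ rectInt u S T := by
      have h := hu.nested_bound (measurableSet_cell K p) hSm hTm (measurableSet_cell K (q + 2))
        (cell_subset (by omega)) hS1 hT1 (cell_subset (by omega))
        (fun x hx y hy => cell_lt_cell (by omega) x hx y (hS hy))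
        (fun x hx y hy => cell_lt_cell (by omega) x (hS hx) y (hT hy))
        (fun x hx y hy => cell_lt_cell (by omega) x hx y (hT hy))
        (fun x hx => cell_lt_cell (by omega) x (hT hx))
      rw [volume_cell, volume_cell, rectInt_cell hK0, ← hv] at h
      have h' := mul_le_mul_of_nonneg_left h (by positivity : (0 : ℝ) ≤ (K : ℝ) ^ 2)
      have e1 : (K : ℝ) ^ 2 * (v * ((1 / (K : ℝ)) ^ 2 * blockAvg u K p (q + 2)))
          = v * blockAvg u K p (q + 2) := by
        field_simp
      have e2 : (K : ℝ) ^ 2 * (1 / K * (1 / K) * rectInt u S T + 2 * Gamma u)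
          = rectInt u S T + 2 * (K : ℝ) ^ 2 * Gamma u := by
        field_simp
      rw [e1, e2] at h'
      have h3 : am - δ ≤ blockAvg u K p (q + 2) := by
        linarith [(abs_le.1 (hδ p (by omega) (q + 2) (by omega))).1]
      linarith [mul_le_mul_of_nonneg_left h3 hv0]
    have hgap : 0 ≤ ap - am := by
      have := ha.blockGap_nonneg K (p + 1) (q + 1)
      rwa [blockGap, if_pos hgood] at this
    have f1 := mul_le_mul_of_nonneg_right hvle hgap
    have f2 := mul_le_mul_of_nonneg_right hvle hδ0
    rw [abs_le]
    constructor <;> linarith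
  · have h1 := hu.rectInt_nonneg S T
    have h2 := hu.rectInt_le hS1 hT1
    have h3 := hz.rectInt_nonneg S T
    have h4 := hz.rectInt_le hS1 hT1
    rw [abs_le]
    constructor <;> linarith

/-- A kernel whose block averages on the `K × K` grid are `δ`-close to the array is close to
`innerInf a` on all rectangles `S × T`, with an error independent of `S` and `T`. -/
lemma abs_rectInt_sub_innerInf_le (ha : IsNestedArray a) {u : ℝ → ℝ → ℝ} (hu : IsUnitKernel u) {K : ℕ}
    (hK0 : 0 < K) {δ : ℝ} (hδ : ∀ i < K, ∀ j < K, |blockAvg u K i j - a K i j| ≤ δ) {S T : Set ℝ}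
    (hSm : MeasurableSet S) (hTm : MeasurableSet T) (hS : S ⊆ Icc 0 1) (hT : T ⊆ Icc 0 1) :
    |rectInt u S T - rectInt (innerInf a) S T|
      ≤ 18 / (K : ℝ) + δ + 2 * (K : ℝ) ^ 4 * Gamma u := by
  have hK : (0 : ℝ) < K := by exact_mod_cast hK0
  have hz := ha.isUnitKernel_innerInf
  set err := (1 / (K : ℝ)) ^ 2 * δ + 2 * (K : ℝ) ^ 2 * Gamma u with herr
  have hcell : ∀ i ∈ Finset.range K, ∀ j ∈ Finset.range K,
      |rectInt u (S ∩ cell K i) (T ∩ cell K j)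
        - rectInt (innerInf a) (S ∩ cell K i) (T ∩ cell K j)|
      ≤ (1 / (K : ℝ)) ^ 2 * blockGap a K i j + (1 / (K : ℝ)) ^ 2 * blockGap a K j i + err := by
    intro i hi j hj
    have p1 := mul_nonneg (sq_nonneg (1 / (K : ℝ))) (ha.blockGap_nonneg K i j)
    have p2 := mul_nonneg (sq_nonneg (1 / (K : ℝ))) (ha.blockGap_nonneg K j i)
    have hS' : S ∩ cell K i ⊆ Icc 0 1 := inter_subset_left.trans hS
    have hT' : T ∩ cell K j ⊆ Icc 0 1 := inter_subset_left.trans hT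
    have hSm' := hSm.inter (measurableSet_cell K i)
    have hTm' := hTm.inter (measurableSet_cell K j)
    rcases le_total i j with hij | hij
    · have := ha.rectInt_sub_le hu hδ hij (Finset.mem_range.1 hj) hSm' hTm' inter_subset_right
        inter_subset_right
      linarith
    · rw [hu.rectInt_swap hS' hT', hz.rectInt_swap hS' hT']
      have := ha.rectInt_sub_le hu hδ hij (Finset.mem_range.1 hi) hTm' hSm' inter_subset_right
        inter_subset_right
      linarith
  rw [rectInt_eq_sum hK0 hu hSm hTm hS hT, rectInt_eq_sum hK0 hz hSm hTm hS hT,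
    ← Finset.sum_sub_distrib]
  simp_rw [← Finset.sum_sub_distrib]
  have hsum := ha.sum_blockGap_le K
  have hsum' : ∑ i ∈ Finset.range K, ∑ j ∈ Finset.range K, blockGap a K j i ≤ 9 * K := by
    rw [Finset.sum_comm]; exact hsum
  calc _ ≤ ∑ i ∈ Finset.range K, ∑ j ∈ Finset.range K,
        |rectInt u (S ∩ cell K i) (T ∩ cell K j)
          - rectInt (innerInf a) (S ∩ cell K i) (T ∩ cell K j)| :=
        (Finset.abs_sum_le_sum_abs _ _).trans
          (Finset.sum_le_sum fun i _ => Finset.abs_sum_le_sum_abs _ _)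
    _ ≤ ∑ i ∈ Finset.range K, ∑ j ∈ Finset.range K, ((1 / (K : ℝ)) ^ 2 * blockGap a K i j
          + (1 / (K : ℝ)) ^ 2 * blockGap a K j i + err) :=
        Finset.sum_le_sum fun i hi => Finset.sum_le_sum fun j hj => hcell i hi j hj
    _ = (1 / (K : ℝ)) ^ 2 * ∑ i ∈ Finset.range K, ∑ j ∈ Finset.range K, blockGap a K i j
        + (1 / (K : ℝ)) ^ 2 * ∑ i ∈ Finset.range K, ∑ j ∈ Finset.range K, blockGap a K j i
        + K * (K * err) := by
        simp [Finset.sum_add_distrib, Finset.mul_sum]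
    _ ≤ (1 / (K : ℝ)) ^ 2 * (9 * K) + (1 / (K : ℝ)) ^ 2 * (9 * K) + K * (K * err) := by gcongr
    _ = _ := by rw [herr]; field_simp; ring

end IsNestedArray

/-! ### Limits along an ultrafilter -/

/-- Along a suitable ultrafilter all block averages of `u n` converge, and when `Gamma (u n)` tends
to `0` the limits increase from outer to inner blocks. -/
lemma exists_isNestedArray {u : ℕ → ℝ → ℝ → ℝ} (hu : ∀ n, IsUnitKernel (u n))
    (hΓ : Tendsto (fun n => Gamma (u n)) atTop (nhds 0)) :
    ∃ (U : Ultrafilter ℕ) (a : ℕ → ℕ → ℕ → ℝ), (U : Filter ℕ) ≤ atTop ∧ IsNestedArray a ∧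
      ∀ K i j, i < K → j < K →
        Tendsto (fun n => blockAvg (u n) K i j) U (nhds (a K i j)) := by
  set U : Ultrafilter ℕ := Ultrafilter.of atTop with hU
  have hUle : (U : Filter ℕ) ≤ atTop := Ultrafilter.of_le atTop
  have hlim : ∀ K i j : ℕ, ∃ c ∈ Icc (0 : ℝ) 1, i < K → j < K →
      Tendsto (fun n => blockAvg (u n) K i j) U (nhds c) := by
    intro K i j
    by_cases h : i < K ∧ j < K
    · obtain ⟨c, hc, hle⟩ := (isCompact_Icc (a := (0 : ℝ)) (b := 1)).ultrafilter_le_nhds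
        (U.map fun n => blockAvg (u n) K i j) (by
          rw [le_principal_iff]
          exact Filter.Eventually.of_forall (f := (U : Filter ℕ))
            fun n => blockAvg_mem (hu n) h.1 h.2)
      exact ⟨c, hc, fun _ _ => hle⟩
    · exact ⟨0, ⟨le_rfl, zero_le_one⟩, fun h1 h2 => absurd ⟨h1, h2⟩ h⟩
  choose a ha hat using hlim
  refine ⟨U, a, hUle, ⟨ha, ?_⟩, hat⟩
  intro K L i j k l h1 hkl hl h2 hi hj
  have hlim : Tendsto (fun n => blockAvg (u n) L k l
      + (K : ℝ) ^ 2 * (L : ℝ) ^ 2 * (2 * Gamma (u n))) U (nhds (a L k l)) := by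
    have := (hat L k l (hkl.trans hl) hl).add
      (((hΓ.mono_left hUle).const_mul 2).const_mul ((K : ℝ) ^ 2 * (L : ℝ) ^ 2))
    simpa using this
  exact le_of_tendsto_of_tendsto' (hat K i j hi hj) hlim
    fun n => blockAvg_nested (hu n) h1 hkl hl h2 hi hj

/-- Along a filter on which the block averages of `u n` converge to the array `a`, the kernels
`u n` converge to `innerInf a`, uniformly over rectangles. -/
lemma eventually_rectInt_sub_le {u : ℕ → ℝ → ℝ → ℝ} (hu : ∀ n, IsUnitKernel (u n))
    {U : Filter ℕ} (hΓ : Tendsto (fun n => Gamma (u n)) U (nhds 0))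
    {a : ℕ → ℕ → ℕ → ℝ} (ha : IsNestedArray a)
    (hat : ∀ K i j, i < K → j < K → Tendsto (fun n => blockAvg (u n) K i j) U (nhds (a K i j)))
    {ε : ℝ} (hε : 0 < ε) :
    ∀ᶠ n in U, ∀ S T : Set ℝ, MeasurableSet S → MeasurableSet T → S ⊆ Icc 0 1 → T ⊆ Icc 0 1 →
      |rectInt (u n) S T - rectInt (innerInf a) S T| ≤ ε := by
  -- `K` is chosen so that the term `18 / K` of the error is at most `ε / 3`.
  obtain ⟨K, hK⟩ := exists_nat_gt (54 / ε)
  have hK0 : (0 : ℝ) < K := (by positivity : (0 : ℝ) < 54 / ε).trans hK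
  have h1 : 18 / (K : ℝ) ≤ ε / 3 := by
    rw [div_lt_iff₀ hε] at hK
    rw [div_le_iff₀ hK0]
    linarith
  have h2 : ∀ᶠ n in U, ∀ i < K, ∀ j < K, |blockAvg (u n) K i j - a K i j| ≤ ε / 3 := by
    have : ∀ᶠ n in U, ∀ i ∈ Finset.range K, ∀ j ∈ Finset.range K,
        |blockAvg (u n) K i j - a K i j| ≤ ε / 3 := by
      rw [Filter.eventually_all_finset]
      intro i hi
      rw [Filter.eventually_all_finset]
      intro j hj
      have h := hat K i j (Finset.mem_range.1 hi) (Finset.mem_range.1 hj)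
      filter_upwards [Metric.tendsto_nhds.1 h (ε / 3) (by positivity)] with n hn
      exact le_of_lt hn
    simpa using this
  have h3 : ∀ᶠ n in U, 2 * (K : ℝ) ^ 4 * Gamma (u n) < ε / 3 := by
    have : Tendsto (fun n => 2 * (K : ℝ) ^ 4 * Gamma (u n)) U (nhds 0) := by
      simpa using hΓ.const_mul (2 * (K : ℝ) ^ 4)
    exact this.eventually_lt_const (by positivity)
  filter_upwards [h2, h3] with n hn2 hn3 S T hSm hTm hS hT
  have := ha.abs_rectInt_sub_innerInf_le (hu n) (by exact_mod_cast hK0) hn2 hSm hTm hS hT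
  linarith

/-! ### The cut norm and the cut distance -/

lemma rectInt_sub {f g : ℝ → ℝ → ℝ} (hf : Measurable (Function.uncurry f))
    (hg : Measurable (Function.uncurry g)) {c d : ℝ}
    (hfb : ∀ x ∈ Icc (0 : ℝ) 1, ∀ y ∈ Icc (0 : ℝ) 1, |f x y| ≤ c)
    (hgb : ∀ x ∈ Icc (0 : ℝ) 1, ∀ y ∈ Icc (0 : ℝ) 1, |g x y| ≤ d) {S T : Set ℝ}
    (hS : S ⊆ Icc 0 1) (hT : T ⊆ Icc 0 1) :
    rectInt (fun x y => f x y - g x y) S T = rectInt f S T - rectInt g S T := by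
  have hm : Measurable (Function.uncurry fun x y => f x y - g x y) := hf.sub hg
  have hb : ∀ x ∈ Icc (0 : ℝ) 1, ∀ y ∈ Icc (0 : ℝ) 1, |f x y - g x y| ≤ c + d :=
    fun x hx y hy => (abs_sub _ _).trans (add_le_add (hfb x hx y hy) (hgb x hx y hy))
  rw [rectInt_eq_prod hm hb hS hT, rectInt_eq_prod hf hfb hS hT, rectInt_eq_prod hg hgb hS hT]
  exact integral_sub (integrableOn_rect hf hfb hS hT) (integrableOn_rect hg hgb hS hT)

lemma abs_rectInt_le_cutNorm {f : ℝ → ℝ → ℝ} {c : ℝ}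
    (hb : ∀ x ∈ Icc (0 : ℝ) 1, ∀ y ∈ Icc (0 : ℝ) 1, |f x y| ≤ c) {S T : Set ℝ}
    (hSm : MeasurableSet S) (hTm : MeasurableSet T) (hS : S ⊆ Icc 0 1) (hT : T ⊆ Icc 0 1) :
    |rectInt f S T| ≤ cutNorm f := by
  refine le_csSup ⟨c, ?_⟩ ⟨S, T, hSm, hTm, hS, hT, rfl⟩
  rintro r ⟨S, T, -, -, hS, hT, rfl⟩
  have hc : 0 ≤ c := (abs_nonneg _).trans (hb 0 (by simp) 0 (by simp))
  have h1 : ∀ x ∈ S, ‖∫ y in T, f x y‖ ≤ c := fun x hx =>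
    (norm_setIntegral_le_of_norm_le_const (vol_lt_top hT) fun y hy =>
      hb x (hS hx) y (hT hy)).trans (mul_le_of_le_one_right hc (vol_le_one hT))
  exact (norm_setIntegral_le_of_norm_le_const (vol_lt_top hS) h1).trans
    (mul_le_of_le_one_right hc (vol_le_one hS))

lemma cutNorm_nonneg (f : ℝ → ℝ → ℝ) : 0 ≤ cutNorm f := by
  refine Real.sSup_nonneg ?_
  rintro r ⟨S, T, -, -, -, -, rfl⟩
  exact abs_nonneg _

lemma setIntegral_comp {φ : ℝ → ℝ}
    (hφ : MeasurePreserving φ (volume.restrict (Icc 0 1)) (volume.restrict (Icc 0 1)))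
    {F : ℝ → ℝ} (hF : Measurable F) {S : Set ℝ} (hSm : MeasurableSet S) (hS : S ⊆ Icc 0 1) :
    ∫ x in S, F x = ∫ x in φ ⁻¹' S ∩ Icc 0 1, F (φ x) := by
  have h1 : volume.restrict S = (Measure.map φ (volume.restrict (Icc (0 : ℝ) 1))).restrict S := by
    rw [hφ.map_eq, Measure.restrict_restrict hSm, inter_eq_left.2 hS]
  rw [h1, setIntegral_map hSm hF.aestronglyMeasurable hφ.aemeasurable,
    Measure.restrict_restrict (hφ.measurable hSm)]

lemma rectInt_comp {φ : ℝ → ℝ}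
    (hφ : MeasurePreserving φ (volume.restrict (Icc 0 1)) (volume.restrict (Icc 0 1)))
    {f : ℝ → ℝ → ℝ} (hf : Measurable (Function.uncurry f)) {S T : Set ℝ}
    (hSm : MeasurableSet S) (hTm : MeasurableSet T) (hS : S ⊆ Icc 0 1) (hT : T ⊆ Icc 0 1) :
    rectInt f S T
      = rectInt (fun x y => f (φ x) (φ y)) (φ ⁻¹' S ∩ Icc 0 1) (φ ⁻¹' T ∩ Icc 0 1) := by
  unfold rectInt
  have hF : Measurable fun x => ∫ y in T, f x y :=
    (hf.stronglyMeasurable.integral_prod_right' (ν := volume.restrict T)).measurable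
  rw [setIntegral_comp hφ hF hSm hS]
  refine integral_congr_ae (ae_of_all _ fun x => ?_)
  exact setIntegral_comp hφ (hf.comp (measurable_const.prodMk measurable_id)) hTm hT

/-- A measure-preserving bijection of `[0,1]` has a measure-preserving inverse; measurability of the
inverse is the Lusin–Souslin theorem. -/
lemma exists_inverse {φ : ℝ → ℝ}
    (hφ : MeasurePreserving φ (volume.restrict (Icc 0 1)) (volume.restrict (Icc 0 1)))
    (hbij : BijOn φ (Icc 0 1) (Icc 0 1)) :
    ∃ ψ : ℝ → ℝ, MeasurePreserving ψ (volume.restrict (Icc 0 1)) (volume.restrict (Icc 0 1)) ∧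
      BijOn ψ (Icc 0 1) (Icc 0 1) ∧ ∀ x ∈ Icc (0 : ℝ) 1, ψ (φ x) = x := by
  classical
  set I : Set ℝ := Icc 0 1 with hI
  have hinv := hbij.invOn_invFunOn
  set ψ₀ := Function.invFunOn φ I
  have hb₀ : BijOn ψ₀ I I := hbij.symm hinv.symm
  -- Outside `[0,1]` the inverse is taken to be the identity, so that it is measurable on all of `ℝ`.
  set ψ : ℝ → ℝ := I.piecewise ψ₀ id with hψ
  have heq : EqOn ψ₀ ψ I := fun x hx => (piecewise_eq_of_mem I ψ₀ id hx).symm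
  have hb : BijOn ψ I I := hb₀.congr heq
  have hleft : ∀ x ∈ I, ψ (φ x) = x := fun x hx => by
    rw [← heq (hbij.mapsTo hx)]; exact hinv.1 hx
  have hright : ∀ x ∈ I, φ (ψ x) = x := fun x hx => by
    rw [← heq hx]; exact hinv.2 hx
  have hm : Measurable ψ := by
    intro s hs
    have : ψ ⁻¹' s = φ '' (s ∩ I) ∪ (s ∩ Iᶜ) := by
      ext x
      by_cases hx : x ∈ I
      · simp only [mem_preimage, mem_union, mem_image, mem_inter_iff, mem_compl_iff, hx,
          not_true_eq_false, and_false, or_false]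
        constructor
        · exact fun h => ⟨ψ x, ⟨h, hb.mapsTo hx⟩, hright x hx⟩
        · rintro ⟨y, ⟨hy, hyI⟩, rfl⟩
          rwa [hleft y hyI]
      · simp only [mem_preimage, mem_union, mem_image, mem_inter_iff, mem_compl_iff, hx,
          not_false_eq_true, and_true, hψ, piecewise_eq_of_notMem I ψ₀ id hx, id]
        constructor
        · exact Or.inr
        · rintro (⟨y, ⟨hy, hyI⟩, rfl⟩ | h)
          · exact absurd (hbij.mapsTo hyI) hx
          · exact h
    rw [this]
    exact ((hs.inter measurableSet_Icc).image_of_measurable_injOn hφ.measurable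
      (hbij.injOn.mono inter_subset_right)).union (hs.inter measurableSet_Icc.compl)
  refine ⟨ψ, ⟨hm, ?_⟩, hb, hleft⟩
  have hae : ψ ∘ φ =ᵐ[volume.restrict I] id :=
    (ae_restrict_iff' measurableSet_Icc).2 (ae_of_all _ hleft)
  calc Measure.map ψ (volume.restrict I)
      = Measure.map ψ (Measure.map φ (volume.restrict I)) := by rw [hφ.map_eq]
    _ = Measure.map (ψ ∘ φ) (volume.restrict I) := Measure.map_map hm hφ.measurable
    _ = volume.restrict I := by rw [Measure.map_congr hae, Measure.map_id]

/-- A triangle inequality: if `u` is close to `w` in cut distance and to `z` in cut norm, then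
`w` is close to `z` in cut distance. If `φ` nearly optimises `cutDist u w`, the inverse of `φ` is used
for `cutDist w z`. -/
lemma cutDist_le {u w z : ℝ → ℝ → ℝ} (hu : IsUnitKernel u) (hz : IsUnitKernel z)
    (hw : IsGraphon w) {ε : ℝ} (huw : cutDist u w < ε)
    (huz : ∀ S T : Set ℝ, MeasurableSet S → MeasurableSet T → S ⊆ Icc 0 1 → T ⊆ Icc 0 1 →
      |rectInt u S T - rectInt z S T| ≤ ε) : cutDist w z ≤ 2 * ε := by
  have hne : {r : ℝ | ∃ φ : ℝ → ℝ,
      MeasurePreserving φ (volume.restrict (Icc 0 1)) (volume.restrict (Icc 0 1)) ∧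
      BijOn φ (Icc 0 1) (Icc 0 1) ∧
      r = cutNorm (fun x y => u (φ x) (φ y) - w x y)}.Nonempty :=
    ⟨_, id, MeasurePreserving.id _, bijOn_id _, rfl⟩
  obtain ⟨r, ⟨φ, hφ, hbij, rfl⟩, hr⟩ := exists_lt_of_csInf_lt hne huw
  obtain ⟨ψ, hψ, hψbij, hψφ⟩ := exists_inverse hφ hbij
  refine (csInf_le ⟨0, ?_⟩ ⟨ψ, hψ, hψbij, rfl⟩ : cutDist w z ≤
    cutNorm fun x y => w (ψ x) (ψ y) - z x y).trans ?_
  · rintro r ⟨_, -, -, rfl⟩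
    exact cutNorm_nonneg _
  refine csSup_le ⟨_, ∅, ∅, MeasurableSet.empty, MeasurableSet.empty, empty_subset _,
    empty_subset _, rfl⟩ ?_
  rintro r ⟨S, T, hSm, hTm, hS, hT, rfl⟩
  have hub : ∀ x ∈ Icc (0 : ℝ) 1, ∀ y ∈ Icc (0 : ℝ) 1, |u x y| ≤ 1 := fun x _ y _ => hu.abs_le x y
  have hwb : ∀ x ∈ Icc (0 : ℝ) 1, ∀ y ∈ Icc (0 : ℝ) 1, |w x y| ≤ 1 := fun x hx y hy => by
    rw [abs_of_nonneg (hw.2.2 x y hx hy).1]; exact (hw.2.2 x y hx hy).2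
  have hwψm : Measurable (Function.uncurry fun x y => w (ψ x) (ψ y)) :=
    hw.1.comp ((hψ.measurable.comp measurable_fst).prodMk (hψ.measurable.comp measurable_snd))
  have hwψb : ∀ x ∈ Icc (0 : ℝ) 1, ∀ y ∈ Icc (0 : ℝ) 1, |w (ψ x) (ψ y)| ≤ 1 := fun x hx y hy =>
    hwb _ (hψbij.mapsTo hx) _ (hψbij.mapsTo hy)
  have huφm : Measurable (Function.uncurry fun x y => u (φ x) (φ y)) :=
    hu.meas.comp ((hφ.measurable.comp measurable_fst).prodMk (hφ.measurable.comp measurable_snd))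
  have huφb : ∀ x ∈ Icc (0 : ℝ) 1, ∀ y ∈ Icc (0 : ℝ) 1, |u (φ x) (φ y)| ≤ 1 :=
    fun x _ y _ => hu.abs_le _ _
  set S' := φ ⁻¹' S ∩ Icc (0 : ℝ) 1
  set T' := φ ⁻¹' T ∩ Icc (0 : ℝ) 1
  have hSm' : MeasurableSet S' := (hφ.measurable hSm).inter measurableSet_Icc
  have hTm' : MeasurableSet T' := (hφ.measurable hTm).inter measurableSet_Icc
  -- The substitution `x ↦ φ x`, `y ↦ φ y` turns `w ∘ ψ` into `w` and `u` into `u ∘ φ`.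
  have hwS : rectInt (fun x y => w (ψ x) (ψ y)) S T = rectInt w S' T' := by
    rw [rectInt_comp hφ hwψm hSm hTm hS hT]
    refine setIntegral_congr_fun hSm' fun x hx => ?_
    refine setIntegral_congr_fun hTm' fun y hy => ?_
    simp only [hψφ x hx.2, hψφ y hy.2]
  have huS := rectInt_comp hφ hu.meas hSm hTm hS hT
  have h1 : |rectInt (fun x y => u (φ x) (φ y) - w x y) S' T'|
      ≤ cutNorm fun x y => u (φ x) (φ y) - w x y :=
    abs_rectInt_le_cutNorm (c := 1 + 1) (fun x hx y hy =>
      (abs_sub _ _).trans (add_le_add (huφb x hx y hy) (hwb x hx y hy))) hSm' hTm'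
      inter_subset_right inter_subset_right
  rw [rectInt_sub huφm hw.1 huφb hwb inter_subset_right inter_subset_right, ← huS, ← hwS] at h1
  have h2 := huz S T hSm hTm hS hT
  change |rectInt (fun x y => w (ψ x) (ψ y) - z x y) S T| ≤ 2 * ε
  rw [rectInt_sub hwψm hz.meas hwψb (fun x _ y _ => hz.abs_le x y) hS hT]
  have h3 := h1.trans hr.le
  rw [abs_le] at h2 h3 ⊢
  constructor <;> linarith

/-- If the graphons of a sequence of labeled graphs converge to `w` in cut distance and
`Γ(w_{G_n}) → 0`, then the limit is Robinsonian: some Robinson graphon `z` satisfies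
`δ_□(w,z) = 0`. -/
theorem limit_is_robinsonian (w : ℝ → ℝ → ℝ) (hw : IsGraphon w) (G : ℕ → FinGraph)
    (hconv : Tendsto (fun n => cutDist (graphStep (G n)) w) atTop (nhds 0))
    (hΓ : Tendsto (fun n => Gamma (graphStep (G n))) atTop (nhds 0)) :
    ∃ z : ℝ → ℝ → ℝ, IsGraphon z ∧ IsRobinson z ∧ cutDist w z = 0 := by
  have hu : ∀ n, IsUnitKernel (graphStep (G n)) := fun n => isUnitKernel_graphStep (G n)
  obtain ⟨U, a, hU, ha, hat⟩ := exists_isNestedArray hu hΓ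
  have hz := ha.isUnitKernel_innerInf
  refine ⟨innerInf a, ⟨hz.meas, hz.symm, fun x y _ _ => ⟨hz.nonneg x y, hz.le_one x y⟩⟩,
    ha.isRobinson_innerInf, le_antisymm ?_ ?_⟩
  · refine le_of_forall_pos_le_add fun ε hε => ?_
    have h1 : ∀ᶠ n in (U : Filter ℕ), cutDist (graphStep (G n)) w < ε / 2 :=
      (hconv.mono_left hU).eventually_lt_const (by positivity)
    have h2 := eventually_rectInt_sub_le hu (hΓ.mono_left hU) ha hat (half_pos hε)
    obtain ⟨n, hn1, hn2⟩ := (h1.and h2).exists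
    linarith [cutDist_le (hu n) hz hw hn1 hn2]
  · refine Real.sInf_nonneg ?_
    rintro r ⟨_, -, -, rfl⟩
    exact cutNorm_nonneg _
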